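/- Assume σ > 0. Suppose s > 0 and an admissible pair (φ,ψ) with J(φ,ψ) = 1 satisfy E(φ,ψ;s) = −s². Then s² ≤ g·k, ψ(0)² ≤ 2g/(σ k), and s² ≤ g·(g(ρ0⁺ − ρ0⁻) − σ k²)/(σ k). In particular the growth rate λ = s tends to 0 both as k → 0 and as k² → g(ρ0⁺ − ρ0⁻)/σ. -/

import Mathlib

open Set MeasureTheory intervalIntegral Filter Topology

noncomputable section

namespace RT

/-- The piecewise integral `∫_{-m}^0 + ∫_0^ℓ`. -/
def pwInt (m l : ℝ) (f : ℝ → ℝ) : ℝ :=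
  (∫ x in (-m)..(0:ℝ), f x) + ∫ x in (0:ℝ)..l, f x

/-- `f` restricted to `[-m,0)` extends continuously to `[-m,0]`, and `f` restricted to
`(0,ℓ]` extends continuously to `[0,ℓ]`. -/
def PiecewiseCont (m l : ℝ) (f : ℝ → ℝ) : Prop :=
  (∃ F : ℝ → ℝ, ContinuousOn F (Icc (-m) 0) ∧ EqOn f F (Ico (-m) 0)) ∧
  (∃ F : ℝ → ℝ, ContinuousOn F (Icc 0 l) ∧ EqOn f F (Ioc 0 l))

/-- A profile function: the restriction to `[-m,0)` extends continuously to `[-m,0]`, and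
the function is continuous on `[0,ℓ]` (hence right-continuous at `0`). -/
def Profile (m l : ℝ) (f : ℝ → ℝ) : Prop :=
  (∃ F : ℝ → ℝ, ContinuousOn F (Icc (-m) 0) ∧ EqOn f F (Ico (-m) 0)) ∧
  ContinuousOn f (Icc 0 l)

/-- The four steady-state profiles `ρ0, p, ε0, δ0` with their positivity assumptions. -/
def ProfilesHyp (m l : ℝ) (ρ0 p ε0 δ0 : ℝ → ℝ) : Prop :=
  Profile m l ρ0 ∧ Profile m l p ∧ Profile m l ε0 ∧ Profile m l δ0 ∧
  (∀ x ∈ Icc (-m) l, 0 < ρ0 x) ∧ (∀ x ∈ Icc (-m) l, 0 < p x) ∧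
  (∀ x ∈ Icc (-m) l, 0 < ε0 x) ∧ (∀ x ∈ Icc (-m) l, 0 ≤ δ0 x)

/-- `f` is continuous on `[-m,ℓ]` and continuously differentiable on `[-m,0]` and on
`[0,ℓ]`, with piecewise derivative `fd`. -/
def PiecewiseC1 (m l : ℝ) (f fd : ℝ → ℝ) : Prop :=
  ContinuousOn f (Icc (-m) l) ∧
  (∀ x ∈ Ico (-m) 0, HasDerivWithinAt f (fd x) (Icc (-m) 0) x) ∧
  (∀ x ∈ Ioc 0 l, HasDerivWithinAt f (fd x) (Icc 0 l) x) ∧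
  PiecewiseCont m l fd

/-- An admissible pair `(φ,ψ)` with piecewise derivatives `(φd,ψd)`. -/
def Admissible (m l : ℝ) (φ ψ φd ψd : ℝ → ℝ) : Prop :=
  PiecewiseC1 m l φ φd ∧ PiecewiseC1 m l ψ ψd ∧
  φ (-m) = 0 ∧ φ l = 0 ∧ ψ (-m) = 0 ∧ ψ l = 0

/-- The energy `E(φ,ψ;s)`. -/
def energyE (m l g σ k : ℝ) (ρ0 p ε0 δ0 : ℝ → ℝ) (φ ψ φd ψd : ℝ → ℝ) (s : ℝ) : ℝ :=
  σ * k ^ 2 / 2 * (ψ 0) ^ 2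
  + (1 / 2) * pwInt m l (fun x =>
      (s * δ0 x + p x * ρ0 x) * (ψd x + k * φ x) ^ 2 - 2 * g * ρ0 x * k * φ x * ψ x)
  + (s / 2) * pwInt m l (fun x =>
      ε0 x * ((φd x - k * ψ x) ^ 2 + (ψd x - k * φ x) ^ 2
        + (1 / 3) * (ψd x + k * φ x) ^ 2))

/-- The normalization functional `J(φ,ψ)`. -/
def energyJ (m l : ℝ) (ρ0 : ℝ → ℝ) (φ ψ : ℝ → ℝ) : ℝ :=
  (1 / 2) * pwInt m l (fun x => ρ0 x * ((φ x) ^ 2 + (ψ x) ^ 2))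

/-- The viscous part `E1(φ,ψ)` of the energy. -/
def energyE1 (m l k : ℝ) (ε0 δ0 : ℝ → ℝ) (φ ψ φd ψd : ℝ → ℝ) : ℝ :=
  (1 / 2) * pwInt m l (fun x => (δ0 x + ε0 x / 3) * (ψd x + k * φ x) ^ 2)
  + (1 / 2) * pwInt m l (fun x =>
      ε0 x * ((φd x - k * ψ x) ^ 2 + (ψd x - k * φ x) ^ 2))

/-- `μ(s)`: the infimum of `E(·,·;s)` over admissible pairs with `J = 1`. -/
def muInf (m l g σ k : ℝ) (ρ0 p ε0 δ0 : ℝ → ℝ) (s : ℝ) : ℝ :=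
  sInf { e : ℝ | ∃ φ ψ φd ψd : ℝ → ℝ, Admissible m l φ ψ φd ψd ∧
    energyJ m l ρ0 φ ψ = 1 ∧ e = energyE m l g σ k ρ0 p ε0 δ0 φ ψ φd ψd s }

/-- The hydrostatic steady-state relation `ρ0' = -g ρ0 / p` on each piece. -/
def Hydrostatic (m l g : ℝ) (ρ0 p : ℝ → ℝ) : Prop :=
  (∀ x ∈ Ico (-m) 0, HasDerivWithinAt ρ0 (-g * ρ0 x / p x) (Ico (-m) 0) x) ∧
  (∀ x ∈ Ioc 0 l, HasDerivWithinAt ρ0 (-g * ρ0 x / p x) (Ioc 0 l) x)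

end RT

namespace RT

/-! The growth rate is controlled by two lower bounds for the bulk part of the energy, in which the
buoyancy term `-2gρ₀kφψ` is absorbed in two different ways. The inequality `2φψ ≤ φ² + ψ²` bounds
it below by `-2gk J`, which gives `s² + σk²ψ(0)²/2 ≤ gk`. Alternatively, completing the square in
the compression `ψ' + kφ` leaves the derivative of `gρ₀ψ²` plus nonnegative terms, the hydrostatic
relation being exactly what makes the remainder cancel; integrating over the two layers, only the
jump of `ρ₀` at the interface survives, so `s² ≤ (g(ρ₀⁺ - ρ₀⁻) - σk²)ψ(0)²/2`. Inserting
the bound for `ψ(0)²` from the first inequality in the second gives the last estimate. -/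

attribute [fun_prop] PiecewiseCont

section PiecewiseContinuity

variable {m l : ℝ} {f h : ℝ → ℝ}

theorem PiecewiseCont.comp_continuous₂ {G : ℝ → ℝ → ℝ} (hG : Continuous (Function.uncurry G))
    (hf : PiecewiseCont m l f) (hh : PiecewiseCont m l h) :
    PiecewiseCont m l (fun x => G (f x) (h x)) := by
  obtain ⟨⟨F, hF, hfF⟩, ⟨F', hF', hfF'⟩⟩ := hf
  obtain ⟨⟨H, hH, hhH⟩, ⟨H', hH', hhH'⟩⟩ := hh
  exact ⟨⟨_, hG.comp_continuousOn (hF.prodMk hH), fun x hx => congrArg₂ G (hfF hx) (hhH hx)⟩,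
    ⟨_, hG.comp_continuousOn (hF'.prodMk hH'), fun x hx => congrArg₂ G (hfF' hx) (hhH' hx)⟩⟩

@[fun_prop]
theorem PiecewiseCont.const (c : ℝ) : PiecewiseCont m l (fun _ => c) :=
  ⟨⟨_, continuousOn_const, fun _ _ => rfl⟩, ⟨_, continuousOn_const, fun _ _ => rfl⟩⟩

@[fun_prop]
theorem PiecewiseCont.add (hf : PiecewiseCont m l f) (hh : PiecewiseCont m l h) :
    PiecewiseCont m l (fun x => f x + h x) :=
  hf.comp_continuous₂ continuous_add hh

@[fun_prop]
theorem PiecewiseCont.sub (hf : PiecewiseCont m l f) (hh : PiecewiseCont m l h) :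
    PiecewiseCont m l (fun x => f x - h x) :=
  hf.comp_continuous₂ continuous_sub hh

@[fun_prop]
theorem PiecewiseCont.mul (hf : PiecewiseCont m l f) (hh : PiecewiseCont m l h) :
    PiecewiseCont m l (fun x => f x * h x) :=
  hf.comp_continuous₂ continuous_mul hh

@[fun_prop]
theorem PiecewiseCont.pow (hf : PiecewiseCont m l f) (n : ℕ) :
    PiecewiseCont m l (fun x => f x ^ n) :=
  hf.comp_continuous₂ (G := fun y _ => y ^ n) (continuous_fst.pow n) hf

theorem PiecewiseCont.integrableOn_left (hf : PiecewiseCont m l f) :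
    IntegrableOn f (Icc (-m) 0) := by
  obtain ⟨F, hF, hfF⟩ := hf.1
  rw [integrableOn_Icc_iff_integrableOn_Ico]
  exact (hF.integrableOn_Icc.mono_set Ico_subset_Icc_self).congr_fun hfF.symm measurableSet_Ico

theorem PiecewiseCont.integrableOn_right (hf : PiecewiseCont m l f) :
    IntegrableOn f (Icc 0 l) := by
  obtain ⟨F, hF, hfF⟩ := hf.2
  rw [integrableOn_Icc_iff_integrableOn_Ioc]
  exact (hF.integrableOn_Icc.mono_set Ioc_subset_Icc_self).congr_fun hfF.symm measurableSet_Ioc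

theorem Profile.piecewiseCont (hf : Profile m l f) : PiecewiseCont m l f :=
  ⟨hf.1, f, hf.2, fun _ _ => rfl⟩

theorem Profile.of_continuousOn (hm : 0 ≤ m) (hl : 0 ≤ l) (hf : ContinuousOn f (Icc (-m) l)) :
    Profile m l f :=
  ⟨⟨f, hf.mono (Icc_subset_Icc_right hl), fun _ _ => rfl⟩,
    hf.mono (Icc_subset_Icc_left (neg_nonpos.2 hm))⟩

theorem Profile.mul (hf : Profile m l f) (hh : Profile m l h) :
    Profile m l (fun x => f x * h x) :=
  ⟨(hf.piecewiseCont.mul hh.piecewiseCont).1, hf.2.mul hh.2⟩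

theorem Profile.exists_continuousOn_left {c : ℝ} (hm : 0 < m) (hf : Profile m l f)
    (hc : Tendsto f (𝓝[<] 0) (𝓝 c)) :
    ∃ F, ContinuousOn F (Icc (-m) 0) ∧ EqOn f F (Ico (-m) 0) ∧ F 0 = c := by
  obtain ⟨F, hF, hfF⟩ := hf.1
  have hm0 : -m < 0 := neg_lt_zero.2 hm
  have hlim : Tendsto F (𝓝[<] 0) (𝓝 (F 0)) := by
    rw [← nhdsWithin_Ico_eq_nhdsLT hm0]
    exact (hF 0 (right_mem_Icc.2 hm0.le)).mono Ico_subset_Icc_self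
  refine ⟨F, hF, hfF, tendsto_nhds_unique (hlim.congr' ?_) hc⟩
  filter_upwards [Ico_mem_nhdsLT hm0] with x hx using (hfF hx).symm

theorem PiecewiseC1.hasDerivAt {fd : ℝ → ℝ} (hf : PiecewiseC1 m l f fd) {x : ℝ}
    (hx : x ∈ Ioo (-m) 0 ∪ Ioo 0 l) : HasDerivAt f (fd x) x := by
  obtain ⟨-, hleft, hright, -⟩ := hf
  rcases hx with hx | hx
  · exact (hleft x (Ioo_subset_Ico_self hx)).hasDerivAt (Icc_mem_nhds hx.1 hx.2)
  · exact (hright x (Ioo_subset_Ioc_self hx)).hasDerivAt (Icc_mem_nhds hx.1 hx.2)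

theorem PiecewiseC1.profile {fd : ℝ → ℝ} (hm : 0 ≤ m) (hl : 0 ≤ l) (hf : PiecewiseC1 m l f fd) :
    Profile m l f :=
  .of_continuousOn hm hl hf.1

theorem PiecewiseC1.piecewiseCont_deriv {fd : ℝ → ℝ} (hf : PiecewiseC1 m l f fd) :
    PiecewiseCont m l fd :=
  hf.2.2.2

end PiecewiseContinuity

section PiecewiseIntegral

variable {m l : ℝ} {f h : ℝ → ℝ}

theorem pwInt_const_mul (c : ℝ) (f : ℝ → ℝ) :
    pwInt m l (fun x => c * f x) = c * pwInt m l f := by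
  simp only [pwInt, intervalIntegral.integral_const_mul, mul_add]

theorem pwInt_nonneg (hm : 0 ≤ m) (hl : 0 ≤ l) (hf : ∀ x ∈ Icc (-m) l, 0 ≤ f x) :
    0 ≤ pwInt m l f :=
  add_nonneg
    (intervalIntegral.integral_nonneg (neg_nonpos.2 hm) fun x hx =>
      hf x (Icc_subset_Icc_right hl hx))
    (intervalIntegral.integral_nonneg hl fun x hx =>
      hf x (Icc_subset_Icc_left (neg_nonpos.2 hm) hx))

theorem pwInt_mono (hm : 0 ≤ m) (hl : 0 ≤ l) (hf : PiecewiseCont m l f)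
    (hh : PiecewiseCont m l h) (hfh : ∀ x ∈ Icc (-m) l, f x ≤ h x) :
    pwInt m l f ≤ pwInt m l h := by
  have hm' : -m ≤ 0 := neg_nonpos.2 hm
  have hleft := setIntegral_mono_on hf.integrableOn_left hh.integrableOn_left measurableSet_Icc
    fun x hx => hfh x (Icc_subset_Icc_right hl hx)
  have hright := setIntegral_mono_on hf.integrableOn_right hh.integrableOn_right measurableSet_Icc
    fun x hx => hfh x (Icc_subset_Icc_left hm' hx)
  simpa only [pwInt, intervalIntegral.integral_of_le hm', intervalIntegral.integral_of_le hl,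
    integral_Icc_eq_integral_Ioc] using add_le_add hleft hright

theorem sub_add_sub_le_pwInt_of_hasDerivAt_of_le {G : ℝ → ℝ} {c : ℝ} (hm : 0 < m) (hl : 0 ≤ l)
    (hG : Profile m l G) (hc : Tendsto G (𝓝[<] 0) (𝓝 c)) (hf : PiecewiseCont m l f)
    (hderiv : ∀ x ∈ Ioo (-m) 0 ∪ Ioo 0 l, ∃ G' ≤ f x, HasDerivAt G G' x) :
    (c - G (-m)) + (G l - G 0) ≤ pwInt m l f := by
  obtain ⟨F, hF, hGF, rfl⟩ := hG.exists_continuousOn_left hm hc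
  have hm0 : -m < 0 := neg_lt_zero.2 hm
  choose! G' hle hG' using hderiv
  rw [hGF (left_mem_Ico.2 hm0)]
  refine add_le_add
    (intervalIntegral.sub_le_integral_of_hasDeriv_right_of_le hm0.le hF (fun x hx => ?_)
      hf.integrableOn_left fun x hx => hle x (.inl hx))
    (intervalIntegral.sub_le_integral_of_hasDeriv_right_of_le hl hG.2
      (fun x hx => (hG' x (.inr hx)).hasDerivWithinAt)
      hf.integrableOn_right fun x hx => hle x (.inr hx))
  have hFG : F =ᶠ[𝓝 x] G :=
    eventuallyEq_of_mem (Ico_mem_nhds hx.1 hx.2) hGF.symm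
  exact ((hG' x (.inl hx)).congr_of_eventuallyEq hFG).hasDerivWithinAt

end PiecewiseIntegral

/-- Convective stability in the interior of each layer. With `p` in the role of the squared speed of
sound, `ρ₀' ≤ -gρ₀/p` says that the squared buoyancy frequency `-g(ρ₀'/ρ₀ + g/p)` is nonnegative;
equality is the hydrostatic relation. -/
def StablyStratified (m l g : ℝ) (ρ0 p : ℝ → ℝ) : Prop :=
  ∀ x ∈ Ioo (-m) 0 ∪ Ioo 0 l, ∃ ρ' ≤ -g * ρ0 x / p x, HasDerivAt ρ0 ρ' x

theorem Hydrostatic.stablyStratified {m l g : ℝ} {ρ0 p : ℝ → ℝ} (h : Hydrostatic m l g ρ0 p) :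
    StablyStratified m l g ρ0 p := by
  rintro x (hx | hx)
  · exact ⟨_, le_rfl, (h.1 x (Ioo_subset_Ico_self hx)).hasDerivAt (Ico_mem_nhds hx.1 hx.2)⟩
  · exact ⟨_, le_rfl, (h.2 x (Ioo_subset_Ioc_self hx)).hasDerivAt (Ioc_mem_nhds hx.1 hx.2)⟩

/-- The density of the compression energy, with the bulk viscosity included, minus that of the
buoyancy: the first integrand of `energyE`. -/
def bulkDensity (g k s : ℝ) (ρ0 p δ0 φ ψ ψd : ℝ → ℝ) (x : ℝ) : ℝ :=
  (s * δ0 x + p x * ρ0 x) * (ψd x + k * φ x) ^ 2 - 2 * g * ρ0 x * k * φ x * ψ x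

section Energy

variable {m l g σ k s ρ0minus : ℝ} {ρ0 p ε0 δ0 φ ψ φd ψd : ℝ → ℝ}

theorem piecewiseCont_bulkDensity (hρ : PiecewiseCont m l ρ0) (hp : PiecewiseCont m l p)
    (hδ : PiecewiseCont m l δ0) (hφ : PiecewiseCont m l φ) (hψ : PiecewiseCont m l ψ)
    (hψd : PiecewiseCont m l ψd) : PiecewiseCont m l (bulkDensity g k s ρ0 p δ0 φ ψ ψd) := by
  unfold bulkDensity
  fun_prop

theorem neg_mul_le_bulkDensity {x : ℝ} (hg : 0 ≤ g) (hk : 0 ≤ k) (hs : 0 ≤ s) (hρ : 0 ≤ ρ0 x)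
    (hp : 0 ≤ p x) (hδ : 0 ≤ δ0 x) :
    -(g * k) * (ρ0 x * (φ x ^ 2 + ψ x ^ 2)) ≤ bulkDensity g k s ρ0 p δ0 φ ψ ψd x := by
  have hcompression : 0 ≤ (s * δ0 x + p x * ρ0 x) * (ψd x + k * φ x) ^ 2 := by positivity
  have hbuoyancy : g * k * ρ0 x * (2 * φ x * ψ x) ≤ g * k * ρ0 x * (φ x ^ 2 + ψ x ^ 2) :=
    mul_le_mul_of_nonneg_left (two_mul_le_add_sq _ _) (by positivity)
  unfold bulkDensity
  linarith

theorem deriv_mul_sq_le_bulkDensity {x ρ' : ℝ} (hg : 0 ≤ g) (hs : 0 ≤ s) (hρ : 0 ≤ ρ0 x)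
    (hp : 0 < p x) (hδ : 0 ≤ δ0 x) (hρ' : ρ' ≤ -g * ρ0 x / p x) :
    ρ' * (g * ψ x ^ 2) + ρ0 x * (g * (2 * ψ x * ψd x)) ≤
      bulkDensity g k s ρ0 p δ0 φ ψ ψd x := by
  have hsquare : bulkDensity g k s ρ0 p δ0 φ ψ ψd x =
      s * δ0 x * (ψd x + k * φ x) ^ 2 + p x * ρ0 x * (ψd x + k * φ x - g * ψ x / p x) ^ 2 +
        (-g * ρ0 x / p x * (g * ψ x ^ 2) + ρ0 x * (g * (2 * ψ x * ψd x))) := by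
    unfold bulkDensity
    field_simp
    ring
  have hviscous : 0 ≤ s * δ0 x * (ψd x + k * φ x) ^ 2 := by positivity
  have hremainder : 0 ≤ p x * ρ0 x * (ψd x + k * φ x - g * ψ x / p x) ^ 2 := by positivity
  have hstratification : ρ' * (g * ψ x ^ 2) ≤ -g * ρ0 x / p x * (g * ψ x ^ 2) :=
    mul_le_mul_of_nonneg_right hρ' (by positivity)
  linarith

theorem neg_mul_energyJ_le_pwInt_bulkDensity (hm : 0 ≤ m) (hl : 0 ≤ l) (hg : 0 ≤ g) (hk : 0 ≤ k)
    (hs : 0 ≤ s) (hρ : PiecewiseCont m l ρ0) (hp : PiecewiseCont m l p)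
    (hδ : PiecewiseCont m l δ0) (hρ_nonneg : ∀ x ∈ Icc (-m) l, 0 ≤ ρ0 x)
    (hp_nonneg : ∀ x ∈ Icc (-m) l, 0 ≤ p x) (hδ_nonneg : ∀ x ∈ Icc (-m) l, 0 ≤ δ0 x)
    (hφ : PiecewiseCont m l φ) (hψ : PiecewiseCont m l ψ) (hψd : PiecewiseCont m l ψd) :
    -(2 * g * k * energyJ m l ρ0 φ ψ) ≤ pwInt m l (bulkDensity g k s ρ0 p δ0 φ ψ ψd) := by
  calc -(2 * g * k * energyJ m l ρ0 φ ψ)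
      = pwInt m l (fun x => -(g * k) * (ρ0 x * (φ x ^ 2 + ψ x ^ 2))) := by
        rw [pwInt_const_mul, energyJ]
        ring
    _ ≤ pwInt m l (bulkDensity g k s ρ0 p δ0 φ ψ ψd) :=
        pwInt_mono hm hl (by fun_prop) (piecewiseCont_bulkDensity hρ hp hδ hφ hψ hψd) fun x hx =>
          neg_mul_le_bulkDensity hg hk hs (hρ_nonneg x hx) (hp_nonneg x hx) (hδ_nonneg x hx)

theorem neg_jump_mul_sq_le_pwInt_bulkDensity (hm : 0 < m) (hl : 0 ≤ l) (hg : 0 ≤ g) (hs : 0 ≤ s)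
    (hρ : Profile m l ρ0) (hp : PiecewiseCont m l p) (hδ : PiecewiseCont m l δ0)
    (hρ_nonneg : ∀ x ∈ Icc (-m) l, 0 ≤ ρ0 x) (hp_pos : ∀ x ∈ Icc (-m) l, 0 < p x)
    (hδ_nonneg : ∀ x ∈ Icc (-m) l, 0 ≤ δ0 x) (hstrat : StablyStratified m l g ρ0 p)
    (hρm : Tendsto ρ0 (𝓝[<] 0) (𝓝 ρ0minus)) (hφ : PiecewiseCont m l φ)
    (hψ : PiecewiseC1 m l ψ ψd) (hψm : ψ (-m) = 0) :
    -(g * (ρ0 0 - ρ0minus) * ψ 0 ^ 2) ≤ pwInt m l (bulkDensity g k s ρ0 p δ0 φ ψ ψd) := by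
  have hm0 : -m < 0 := neg_lt_zero.2 hm
  have hcont : ContinuousOn (fun x => g * ψ x ^ 2) (Icc (-m) l) := (hψ.1.pow 2).const_mul g
  have hlim : Tendsto (fun x => g * ψ x ^ 2) (𝓝[<] 0) (𝓝 (g * ψ 0 ^ 2)) :=
    (hcont 0 ⟨hm0.le, hl⟩).mono_of_mem_nhdsWithin
      (mem_of_superset (Ico_mem_nhdsLT hm0) (Ico_subset_Icc_self.trans (Icc_subset_Icc_right hl)))
  have hderiv : ∀ x ∈ Ioo (-m) 0 ∪ Ioo 0 l,
      ∃ G' ≤ bulkDensity g k s ρ0 p δ0 φ ψ ψd x,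
        HasDerivAt (fun x => ρ0 x * (g * ψ x ^ 2)) G' x := by
    intro x hx
    obtain ⟨ρ', hρ'_le, hρ'⟩ := hstrat x hx
    have hxI : x ∈ Icc (-m) l := by
      rcases hx with hx | hx <;> constructor <;> linarith [hx.1, hx.2]
    refine ⟨_, deriv_mul_sq_le_bulkDensity hg hs (hρ_nonneg x hxI) (hp_pos x hxI) (hδ_nonneg x hxI)
      hρ'_le, (hρ'.fun_mul (((hψ.hasDerivAt hx).fun_pow 2).const_mul g)).congr_deriv ?_⟩
    ring
  have hjump := sub_add_sub_le_pwInt_of_hasDerivAt_of_le hm hl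
    (hρ.mul (.of_continuousOn hm.le hl hcont)) (hρm.mul hlim)
    (piecewiseCont_bulkDensity hρ.piecewiseCont hp hδ hφ (hψ.profile hm.le hl).piecewiseCont
      hψ.piecewiseCont_deriv) hderiv
  have htop : 0 ≤ ρ0 l * (g * ψ l ^ 2) :=
    mul_nonneg (hρ_nonneg l (right_mem_Icc.2 (hm0.le.trans hl))) (by positivity)
  rw [hψm] at hjump
  linarith

theorem surface_add_bulk_le_energyE (hm : 0 ≤ m) (hl : 0 ≤ l) (hs : 0 ≤ s)
    (hε_nonneg : ∀ x ∈ Icc (-m) l, 0 ≤ ε0 x) :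
    σ * k ^ 2 / 2 * ψ 0 ^ 2 + 1 / 2 * pwInt m l (bulkDensity g k s ρ0 p δ0 φ ψ ψd) ≤
      energyE m l g σ k ρ0 p ε0 δ0 φ ψ φd ψd s := by
  refine le_add_of_nonneg_right
    (mul_nonneg (div_nonneg hs zero_le_two) (pwInt_nonneg hm hl fun x hx => ?_))
  have := hε_nonneg x hx
  positivity

theorem surface_sub_mul_energyJ_le_energyE (hm : 0 ≤ m) (hl : 0 ≤ l) (hg : 0 ≤ g) (hk : 0 ≤ k)
    (hs : 0 ≤ s) (hprof : ProfilesHyp m l ρ0 p ε0 δ0) (hφ : PiecewiseC1 m l φ φd)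
    (hψ : PiecewiseC1 m l ψ ψd) :
    σ * k ^ 2 / 2 * ψ 0 ^ 2 - g * k * energyJ m l ρ0 φ ψ ≤
      energyE m l g σ k ρ0 p ε0 δ0 φ ψ φd ψd s := by
  obtain ⟨hρ, hp, -, hδ, hρ_pos, hp_pos, hε_pos, hδ_nonneg⟩ := hprof
  refine le_trans ?_ (surface_add_bulk_le_energyE hm hl hs fun x hx => (hε_pos x hx).le)
  linarith [neg_mul_energyJ_le_pwInt_bulkDensity hm hl hg hk hs hρ.piecewiseCont hp.piecewiseCont
    hδ.piecewiseCont (fun x hx => (hρ_pos x hx).le) (fun x hx => (hp_pos x hx).le) hδ_nonneg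
    (hφ.profile hm hl).piecewiseCont (hψ.profile hm hl).piecewiseCont hψ.piecewiseCont_deriv]

theorem surface_sub_jump_le_energyE (hm : 0 < m) (hl : 0 ≤ l) (hg : 0 ≤ g) (hs : 0 ≤ s)
    (hprof : ProfilesHyp m l ρ0 p ε0 δ0) (hstrat : StablyStratified m l g ρ0 p)
    (hρm : Tendsto ρ0 (𝓝[<] 0) (𝓝 ρ0minus)) (hφ : PiecewiseC1 m l φ φd)
    (hψ : PiecewiseC1 m l ψ ψd) (hψm : ψ (-m) = 0) :
    (σ * k ^ 2 - g * (ρ0 0 - ρ0minus)) / 2 * ψ 0 ^ 2 ≤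
      energyE m l g σ k ρ0 p ε0 δ0 φ ψ φd ψd s := by
  obtain ⟨hρ, hp, -, hδ, hρ_pos, hp_pos, hε_pos, hδ_nonneg⟩ := hprof
  refine le_trans ?_ (surface_add_bulk_le_energyE hm.le hl hs fun x hx => (hε_pos x hx).le)
  linarith [neg_jump_mul_sq_le_pwInt_bulkDensity (k := k) hm hl hg hs hρ hp.piecewiseCont
    hδ.piecewiseCont (fun x hx => (hρ_pos x hx).le) hp_pos hδ_nonneg hstrat hρm
    (hφ.profile hm.le hl).piecewiseCont hψ hψm]

end Energy

theorem growth_rate_bounds_general {m l g σ k s ρ0minus : ℝ} {ρ0 p ε0 δ0 φ ψ φd ψd : ℝ → ℝ}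
    (hm : 0 < m) (hl : 0 ≤ l) (hg : 0 ≤ g) (hσ : 0 < σ) (hk : 0 < k) (hs : 0 < s)
    (hprof : ProfilesHyp m l ρ0 p ε0 δ0) (hstrat : StablyStratified m l g ρ0 p)
    (hρm : Tendsto ρ0 (𝓝[<] 0) (𝓝 ρ0minus)) (hφ : PiecewiseC1 m l φ φd)
    (hψ : PiecewiseC1 m l ψ ψd) (hψm : ψ (-m) = 0) (hJ : energyJ m l ρ0 φ ψ ≤ 1)
    (hE : energyE m l g σ k ρ0 p ε0 δ0 φ ψ φd ψd s ≤ -s ^ 2) :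
    s ^ 2 ≤ g * k ∧
    ψ 0 ^ 2 ≤ 2 * g / (σ * k) ∧
    s ^ 2 ≤ g * (g * (ρ0 0 - ρ0minus) - σ * k ^ 2) / (σ * k) := by
  have hgk : g * k * energyJ m l ρ0 φ ψ ≤ g * k := mul_le_of_le_one_right (by positivity) hJ
  have hsum : s ^ 2 + σ * k ^ 2 / 2 * ψ 0 ^ 2 ≤ g * k := by
    linarith [surface_sub_mul_energyJ_le_energyE (σ := σ) hm.le hl hg hk.le hs.le hprof hφ hψ]
  have hjump : s ^ 2 ≤ (g * (ρ0 0 - ρ0minus) - σ * k ^ 2) / 2 * ψ 0 ^ 2 := by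
    linarith [surface_sub_jump_le_energyE (σ := σ) (k := k) hm hl hg hs.le hprof hstrat hρm hφ hψ
      hψm]
  have hψ0 : ψ 0 ^ 2 ≤ 2 * g / (σ * k) := by
    rw [le_div_iff₀ (mul_pos hσ hk)]
    refine le_of_mul_le_mul_left ?_ hk
    linarith [sq_nonneg s]
  have hcoeff : 0 < (g * (ρ0 0 - ρ0minus) - σ * k ^ 2) / 2 :=
    pos_of_mul_pos_left ((pow_pos hs 2).trans_le hjump) (sq_nonneg _)
  refine ⟨le_of_add_le_of_nonneg_left hsum (by positivity), hψ0, ?_⟩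
  calc s ^ 2 ≤ (g * (ρ0 0 - ρ0minus) - σ * k ^ 2) / 2 * ψ 0 ^ 2 := hjump
    _ ≤ (g * (ρ0 0 - ρ0minus) - σ * k ^ 2) / 2 * (2 * g / (σ * k)) := by gcongr
    _ = g * (g * (ρ0 0 - ρ0minus) - σ * k ^ 2) / (σ * k) := by ring

/-- Bounds on the growth rate: if an admissible normalized pair satisfies
`E(φ,ψ;s) = -s²`, then `s² ≤ g k`, `ψ(0)² ≤ 2g/(σ k)`, and
`s² ≤ g (g(ρ0⁺ - ρ0⁻) - σ k²)/(σ k)`.  Here `ρ0⁺ = ρ0 0` and `ρ0⁻` is the left limit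
of `ρ0` at `0`.  (In particular `λ = s → 0` as `k → 0` and as `k² → g(ρ0⁺ - ρ0⁻)/σ`.) -/
theorem growth_rate_bounds (m l g σ k s : ℝ) (ρ0 p ε0 δ0 φ ψ φd ψd : ℝ → ℝ)
    (ρ0minus : ℝ)
    (hm : 0 < m) (hl : 0 < l) (hg : 0 < g) (hσ : 0 < σ) (hk : 0 < k) (hs : 0 < s)
    (hprof : ProfilesHyp m l ρ0 p ε0 δ0)
    (hhydro : Hydrostatic m l g ρ0 p)
    (hρm : Tendsto ρ0 (𝓝[<] 0) (𝓝 ρ0minus))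
    (hadm : Admissible m l φ ψ φd ψd)
    (hJ : energyJ m l ρ0 φ ψ = 1)
    (hE : energyE m l g σ k ρ0 p ε0 δ0 φ ψ φd ψd s = -s ^ 2) :
    s ^ 2 ≤ g * k ∧
    (ψ 0) ^ 2 ≤ 2 * g / (σ * k) ∧
    s ^ 2 ≤ g * (g * (ρ0 0 - ρ0minus) - σ * k ^ 2) / (σ * k) := by
  obtain ⟨hφ, hψ, -, -, hψm, -⟩ := hadm
  exact growth_rate_bounds_general hm hl.le hg.le hσ hk hs hprof hhydro.stablyStratified hρm hφ hψ
    hψm hJ.le hE.le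

end RT
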